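/- 0-1 law for local classes: let K be a local class of finite Σ-structures with Fraïssé limit R, and for N ∈ ℕ let μ_N be the frame-wise uniform measure on K^N. For every first-order sentence φ over Σ, μ_N({S ∈ K^N : S ⊨ φ}) converges as N → ∞, with limit 1 if φ holds in R and limit 0 otherwise. -/

import Mathlib

open FirstOrder FirstOrder.Language

universe u v

/-- A finite structure for a relational signature `L`, with underlying set a finite subset of `ℕ`,
given by its relation interpretations (sets of tuples of natural numbers). -/
structure FinStruc (L : FirstOrder.Language.{u, v}) where
  carrier : Finset ℕ
  rel : ∀ ⦃n : ℕ⦄, L.Relations n → Set (Fin n → ℕ)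
  rel_mem : ∀ ⦃n : ℕ⦄ (R : L.Relations n) (t : Fin n → ℕ), t ∈ rel R → ∀ i, t i ∈ carrier

variable {L : FirstOrder.Language.{u, v}}

/-- The first-order structure on the underlying set of a `FinStruc`. -/
instance FinStruc.str [L.IsRelational] (A : FinStruc L) :
    L.Structure {x : ℕ // x ∈ A.carrier} where
  funMap := fun f _ => isEmptyElim f
  RelMap := fun {n} R t => (fun i => (t i : ℕ)) ∈ A.rel R

/-- Satisfaction of a sentence in a `FinStruc`. -/
def FinStruc.Sat [L.IsRelational] (A : FinStruc L) (φ : L.Sentence) : Prop :=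
  {x : ℕ // x ∈ A.carrier} ⊨ φ

/-- The General Irreflexivity axiom for a relation symbol `R` and coordinates `i`, `j`:
`∀ x₁ … xₙ, R (x₁, …, xₙ) → ¬ (xᵢ = xⱼ)`. -/
def giSentence {n : ℕ} (R : L.Relations n) (i j : Fin n) : L.Sentence :=
  BoundedFormula.alls
    ((Relations.boundedFormula R fun k => Term.var (Sum.inr k)).imp
      (Term.bdEqual (Term.var (Sum.inr i)) (Term.var (Sum.inr j))).not)

/-- The General Irreflexivity axiom schema `Φ^Σ_GI`. -/
def GITheory (L : FirstOrder.Language.{u, v}) : L.Theory :=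
  { φ | ∃ (n : ℕ) (R : L.Relations n) (i j : Fin n), i ≠ j ∧ φ = giSentence R i j }

/-- A sentence is local if it has the form `∀ x₁ … xₘ, R (x₁, …, xₘ) → ψ` with `m > 0` and
`ψ` quantifier-free. -/
def IsLocalSentence (φ : L.Sentence) : Prop :=
  ∃ m : ℕ, 0 < m ∧ ∃ (R : L.Relations m) (ψ : L.BoundedFormula Empty m), ψ.IsQF ∧
    φ = BoundedFormula.alls ((Relations.boundedFormula R fun k => Term.var (Sum.inr k)).imp ψ)

/-- A class of finite structures is local if it is the class of models of a set of local
sentences containing the General Irreflexivity axioms. -/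
def IsLocalClass [L.IsRelational] (K : Set (FinStruc L)) : Prop :=
  ∃ Φ : L.Theory, (∀ φ ∈ Φ, IsLocalSentence φ) ∧ GITheory L ⊆ Φ ∧
    K = { A : FinStruc L | ∀ φ ∈ Φ, A.Sat φ }

/-- The `n`-frame of a structure: same underlying set, same interpretations of relation symbols
of arity at most `n`, empty interpretation of all higher-arity relation symbols. -/
def FinStruc.frame (A : FinStruc L) (n : ℕ) : FinStruc L where
  carrier := A.carrier
  rel := fun m R => if m ≤ n then A.rel R else ∅
  rel_mem := by
    intro m R t ht i
    by_cases h : m ≤ n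
    · exact A.rel_mem R t (by simpa [h] using ht) i
    · simp [h] at ht

/-- The induced substructure of `B` on a finite set `X`. -/
def FinStruc.restrict (B : FinStruc L) (X : Finset ℕ) : FinStruc L where
  carrier := B.carrier ∩ X
  rel := fun _ R => { t | t ∈ B.rel R ∧ ∀ i, t i ∈ X }
  rel_mem := fun _ R t ht i => Finset.mem_inter.2 ⟨B.rel_mem R t ht.1 i, ht.2 i⟩

/-- `A` is the induced substructure of `B` on the subset `A.carrier` of `B.carrier`. -/
def FinStruc.IsInducedSub (A B : FinStruc L) : Prop :=
  A.carrier ⊆ B.carrier ∧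
    ∀ ⦃n : ℕ⦄ (R : L.Relations n) (t : Fin n → ℕ),
      (∀ i, t i ∈ A.carrier) → (t ∈ A.rel R ↔ t ∈ B.rel R)

/-- `A` is isomorphic to `B`: there is a bijection of the underlying sets preserving all
relations in both directions. -/
def FinStruc.IsIsoTo (A B : FinStruc L) : Prop :=
  ∃ f : ℕ → ℕ, Set.BijOn f ↑A.carrier ↑B.carrier ∧
    ∀ ⦃n : ℕ⦄ (R : L.Relations n) (t : Fin n → ℕ), (∀ i, t i ∈ A.carrier) →
      (t ∈ A.rel R ↔ (fun i => f (t i)) ∈ B.rel R)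

/-- The Adoptive Property. -/
def AdoptiveProperty (K : Set (FinStruc L)) : Prop :=
  ∀ (n : ℕ) (B A A' : FinStruc L), B ∈ K → A ∈ K → A' ∈ K →
    A.IsInducedSub B → A.carrier.card = n → A'.carrier = A.carrier →
    A'.frame (n - 1) = A.frame (n - 1) →
    ∃ B' ∈ K, B'.carrier = B.carrier ∧ B'.frame (n - 1) = B.frame (n - 1) ∧
      ∀ R : L.Relations n,
        B'.rel R = (B.rel R \ { t | ∀ i, t i ∈ A.carrier }) ∪ A'.rel R

/-- A structure for `L` with underlying set `ℕ`, given by its relation interpretations. -/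
structure InfStruc (L : FirstOrder.Language.{u, v}) where
  rel : ∀ ⦃n : ℕ⦄, L.Relations n → Set (Fin n → ℕ)

/-- The first-order structure on `ℕ` determined by an `InfStruc`. -/
def InfStruc.str [L.IsRelational] (M : InfStruc L) : L.Structure ℕ where
  funMap := fun f _ => isEmptyElim f
  RelMap := fun {n} R t => t ∈ M.rel R

/-- Satisfaction of a sentence in an `InfStruc`. -/
def InfStruc.Sat [L.IsRelational] (M : InfStruc L) (φ : L.Sentence) : Prop :=
  @FirstOrder.Language.Sentence.Realize L ℕ M.str φ

/-- The induced finite substructure of an `InfStruc` on a finite set `X`. -/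
def InfStruc.restrict (M : InfStruc L) (X : Finset ℕ) : FinStruc L where
  carrier := X
  rel := fun _ R => { t | t ∈ M.rel R ∧ ∀ i, t i ∈ X }
  rel_mem := fun _ _ _ ht i => ht.2 i

/-- The bundled structures isomorphic to a member of `K`. -/
def toBundled (L : FirstOrder.Language.{u, v}) [L.IsRelational] (K : Set (FinStruc L)) :
    Set (CategoryTheory.Bundled.{0} L.Structure) :=
  { M | ∃ A ∈ K, Nonempty (M ≃[L] {x : ℕ // x ∈ A.carrier}) }

/-- `K^{X,l}_{A,k}`: the set of `l`-frames of members `B` of `K` with underlying set `X` whose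
`k`-frame restricted to the underlying set of `A` is the `k`-frame of `A`. -/
def KsetFr (K : Set (FinStruc L)) (X : Finset ℕ) (l : ℕ) (A : FinStruc L) (k : ℕ) :
    Set (FinStruc L) :=
  { F | ∃ B ∈ K, B.carrier = X ∧ (B.frame k).restrict A.carrier = A.frame k ∧ F = B.frame l }

/-- `N(S,k)`: the number of distinct `(k+1)`-frames of members of `K` on the underlying set of `S`
whose `k`-frame is the `k`-frame of `S`. -/
noncomputable def Ncount (K : Set (FinStruc L)) (S : FinStruc L) (k : ℕ) : ℕ :=
  (KsetFr K S.carrier (k + 1) S k).ncard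

/-- `K^N`: the members of `K` with underlying set `{0, …, N-1}`. -/
def KNset (K : Set (FinStruc L)) (N : ℕ) : Set (FinStruc L) :=
  { S | S ∈ K ∧ S.carrier = Finset.range N }

/-- The basic event `O_N(A,k)`: members of `K^N` whose induced substructure on the underlying
set of `A` has `k`-frame equal to the `k`-frame of `A`. -/
def ONset (K : Set (FinStruc L)) (N : ℕ) (A : FinStruc L) (k : ℕ) : Set (FinStruc L) :=
  { S | S ∈ KNset K N ∧ (S.frame k).restrict A.carrier = A.frame k }

/-! Think of the random structure as revealed one set `Z` of points at a time, each after its proper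
subsets. Local sentences only speak about the tuples inside a single related tuple, so partial
information over a downward closed family of sets can be glued with any compatible structure on a
further set. Hence the recursion for `μ_N` says that each revealed set multiplies the probability by
the inverse of the number of its fillings, a number bounded in terms of the size of the set alone.
A given one-point extension of a pattern on `m` points therefore fails at each candidate point with
conditional probability at most `1 - ε`, whatever happened at the earlier candidates, and at all
`N - m` of them with probability at most `(1 - ε) ^ (N - m)`. There are only polynomially many
patterns, so asymptotically almost surely all extension properties needed for `φ` hold. They and the
ultrahomogeneity of the limit give a back-and-forth of the length required by `φ`. -/

section BackAndForth

variable {M N ι κ : Type*} [L.Structure M] [L.Structure N]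

variable (L) in
/-- Two tuples, possibly in different structures, satisfy the same atomic formulas in the
language `L`, which is meant to be relational. -/
structure SameAtomicType (a : ι → M) (b : ι → N) : Prop where
  eq_iff : ∀ i j, a i = a j ↔ b i = b j
  relMap_iff : ∀ {k : ℕ} (r : L.Relations k) (f : Fin k → ι),
    Structure.RelMap r (a ∘ f) ↔ Structure.RelMap r (b ∘ f)

namespace SameAtomicType

theorem symm {a : ι → M} {b : ι → N} (h : SameAtomicType L a b) : SameAtomicType L b a where
  eq_iff i j := (h.eq_iff i j).symm
  relMap_iff r f := (h.relMap_iff r f).symm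

theorem comp {a : ι → M} {b : ι → N} (h : SameAtomicType L a b) (f : κ → ι) :
    SameAtomicType L (a ∘ f) (b ∘ f) where
  eq_iff i j := h.eq_iff (f i) (f j)
  relMap_iff r g := h.relMap_iff r (f ∘ g)

theorem sumElim_empty {a : ι → M} {b : ι → N} (h : SameAtomicType L a b) (v : Empty → M)
    (w : Empty → N) : SameAtomicType L (Sum.elim v a) (Sum.elim w b) := by
  convert h.comp (Sum.elim Empty.elim id) using 1 <;> ext (i | i) <;> first | rfl | cases i

theorem of_embedding (a : ι → M) (e : M ↪[L] N) : SameAtomicType L a (e ∘ a) where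
  eq_iff _ _ := e.injective.eq_iff.symm
  relMap_iff r f := (e.map_rel r (a ∘ f)).symm

end SameAtomicType

theorem exists_eq_var [L.IsRelational] (t : L.Term ι) : ∃ i, t = Term.var i := by
  cases t with
  | var i => exact ⟨i, rfl⟩
  | func f _ => exact isEmptyElim f

theorem SameAtomicType.realize_iff [L.IsRelational] {n : ℕ} {v : ι → M} {w : ι → N}
    {a : Fin n → M} {b : Fin n → N} (h : SameAtomicType L (Sum.elim v a) (Sum.elim w b))
    {ψ : L.BoundedFormula ι n} (hψ : ψ.IsQF) : ψ.Realize v a ↔ ψ.Realize w b := by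
  induction hψ with
  | falsum => exact Iff.rfl
  | imp _ _ ih₁ ih₂ => simp only [BoundedFormula.realize_imp, ih₁, ih₂]
  | of_isAtomic hatomic =>
    cases hatomic with
    | equal t₁ t₂ =>
      obtain ⟨i, rfl⟩ := exists_eq_var t₁
      obtain ⟨j, rfl⟩ := exists_eq_var t₂
      exact h.eq_iff i j
    | rel r ts =>
      choose f hf using fun i => exists_eq_var (ts i)
      obtain rfl : ts = fun i => Term.var (f i) := funext hf
      exact h.relMap_iff r f

/-- The largest number of bound variables simultaneously in scope in a formula: the number of
rounds of the back-and-forth game that decides it. -/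
def varBound : ∀ {n : ℕ}, L.BoundedFormula ι n → ℕ
  | n, .falsum => n
  | n, .equal _ _ => n
  | n, .rel _ _ => n
  | _, .imp φ ψ => max (varBound φ) (varBound ψ)
  | _, .all φ => varBound φ

theorem le_varBound : ∀ {n : ℕ} (φ : L.BoundedFormula ι n), n ≤ varBound φ
  | _, .falsum => le_rfl
  | _, .equal _ _ => le_rfl
  | _, .rel _ _ => le_rfl
  | _, .imp φ _ => (le_varBound φ).trans (le_max_left _ _)
  | _, .all φ => (Nat.le_succ _).trans (le_varBound φ)

variable (L M N) in
/-- One direction of the back-and-forth game with `q` rounds: against a tuple of `M` shorter than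
`q` and a tuple of `N` of the same atomic type, every new element of `M` has an answer in `N`. -/
def ForthUpTo (q : ℕ) : Prop :=
  ∀ m < q, ∀ (a : Fin m → M) (b : Fin m → N), SameAtomicType L a b →
    ∀ c : M, ∃ d : N, SameAtomicType L (Fin.snoc a c : Fin (m + 1) → M) (Fin.snoc b d)

theorem realize_iff_of_forthUpTo [L.IsRelational] {q : ℕ} (hMN : ForthUpTo L M N q)
    (hNM : ForthUpTo L N M q) (v : Empty → M) (w : Empty → N) {n : ℕ}
    (φ : L.BoundedFormula Empty n) (hφ : varBound φ ≤ q) {a : Fin n → M} {b : Fin n → N}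
    (h : SameAtomicType L a b) : φ.Realize v a ↔ φ.Realize w b := by
  induction φ with
  | falsum => exact Iff.rfl
  | equal t₁ t₂ =>
    exact (h.sumElim_empty v w).realize_iff (BoundedFormula.IsAtomic.equal t₁ t₂).isQF
  | rel r ts =>
    exact (h.sumElim_empty v w).realize_iff (BoundedFormula.IsAtomic.rel r ts).isQF
  | imp φ ψ ihφ ihψ =>
    exact imp_congr (ihφ ((le_max_left _ _).trans hφ) h) (ihψ ((le_max_right _ _).trans hφ) h)
  | all φ ih =>
    have hn := ((Nat.lt_succ_self _).trans_le (le_varBound φ)).trans_le hφ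
    constructor
    · intro hall d
      obtain ⟨c, hc⟩ := hNM _ hn b a h.symm d
      exact (ih hφ hc.symm).1 (hall c)
    · intro hall c
      obtain ⟨d, hd⟩ := hMN _ hn a b h c
      exact (ih hφ hd).2 (hall d)

theorem sentence_realize_iff_of_forthUpTo [L.IsRelational] [IsEmpty (L.Relations 0)]
    (φ : L.Sentence) (hMN : ForthUpTo L M N (varBound φ))
    (hNM : ForthUpTo L N M (varBound φ)) : M ⊨ φ ↔ N ⊨ φ := by
  refine realize_iff_of_forthUpTo hMN hNM _ _ φ le_rfl ⟨fun i => i.elim0, fun {k} r f => ?_⟩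
  cases k with
  | zero => exact isEmptyElim r
  | succ k => exact (f 0).elim0

theorem exists_embedding_extending [L.IsRelational] [Finite ι] (hN : L.IsUltrahomogeneous N)
    [Nonempty (M ↪[L] N)] {a : ι → M} {b : ι → N} (h : SameAtomicType L a b) :
    ∃ e : M ↪[L] N, ∀ i, e (a i) = b i := by
  let S := Substructure.closure L (Set.range a)
  have hS (x : S) : ∃ i, a i = x :=
    (Substructure.mem_closure_iff_of_isRelational L (Set.range a) (x : M)).1 x.2
  choose i hi using hS
  let f : S ↪[L] N :=
    { toFun := fun x => b (i x)
      inj' := fun x y hxy => by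
        have := (h.eq_iff (i x) (i y)).2 hxy
        rwa [hi, hi, ← Subtype.ext_iff] at this
      map_fun' := fun f => isEmptyElim f
      map_rel' := fun r x => by
        have hx : a ∘ (i ∘ x) = fun j => (x j : M) := funext fun j => hi (x j)
        have := h.relMap_iff r (i ∘ x)
        rw [hx] at this
        exact this.symm }
  have hfg : Structure.FG L S :=
    S.fg_iff_structure_fg.1 (Substructure.fg_closure (Set.finite_range a))
  obtain ⟨e, he⟩ := hN.extend_embedding hfg f S.subtype
  refine ⟨e, fun j => ?_⟩
  have hj : a j ∈ S := Substructure.subset_closure (Set.mem_range_self j)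
  calc e (a j) = f ⟨a j, hj⟩ := (DFunLike.congr_fun he ⟨a j, hj⟩).symm
    _ = b j := (h.eq_iff _ _).1 (hi ⟨a j, hj⟩)

theorem forthUpTo_of_isUltrahomogeneous [L.IsRelational] (hN : L.IsUltrahomogeneous N)
    [Nonempty (M ↪[L] N)] (q : ℕ) : ForthUpTo L M N q := by
  intro m _ a b h c
  obtain ⟨e, he⟩ := exists_embedding_extending hN h
  have hsnoc : e ∘ (Fin.snoc a c : Fin (m + 1) → M) = Fin.snoc b (e c) := by
    rw [Fin.comp_snoc, show e ∘ a = b from funext he]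
  exact ⟨e c, hsnoc ▸ SameAtomicType.of_embedding _ e⟩

end BackAndForth

section TupleRange

variable {n k : ℕ}

/-- The set of entries of a tuple. -/
def tupleRange (t : Fin n → ℕ) : Finset ℕ :=
  Finset.univ.image t

theorem tupleRange_subset_iff {t : Fin n → ℕ} {X : Finset ℕ} :
    tupleRange t ⊆ X ↔ ∀ i, t i ∈ X := by
  simp only [tupleRange, Finset.image_subset_iff, Finset.mem_univ, true_imp_iff]

theorem tupleRange_comp_subset (t : Fin n → ℕ) (f : Fin k → Fin n) :
    tupleRange (t ∘ f) ⊆ tupleRange t :=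
  tupleRange_subset_iff.2 fun i => Finset.mem_image_of_mem t (Finset.mem_univ (f i))

end TupleRange

namespace FinStruc

variable {P Q S T : FinStruc L} {D E : Finset (Finset ℕ)} {X Z : Finset ℕ}

theorem ext (hcarrier : P.carrier = Q.carrier)
    (hrel : ∀ ⦃n : ℕ⦄ (r : L.Relations n) t, t ∈ P.rel r ↔ t ∈ Q.rel r) : P = Q := by
  obtain ⟨_, relP, _⟩ := P
  obtain ⟨_, relQ, _⟩ := Q
  obtain rfl : relP = relQ := funext fun n => funext fun r => Set.ext (hrel r)
  congr

theorem tupleRange_subset_carrier {n : ℕ} {r : L.Relations n} {t : Fin n → ℕ}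
    (ht : t ∈ P.rel r) : tupleRange t ⊆ P.carrier :=
  tupleRange_subset_iff.2 (P.rel_mem r t ht)

/-- `P` and `Q` have the same relations on the tuples whose set of entries belongs to `D`.
Knowing a structure up to agreement on `D` is the state of information at a stage of its random
construction. -/
def AgreeOn (P : FinStruc L) (D : Finset (Finset ℕ)) (Q : FinStruc L) : Prop :=
  ∀ ⦃n : ℕ⦄ (r : L.Relations n) (t : Fin n → ℕ), tupleRange t ∈ D → (t ∈ P.rel r ↔ t ∈ Q.rel r)

namespace AgreeOn

theorem refl (P : FinStruc L) (D : Finset (Finset ℕ)) : P.AgreeOn D P :=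
  fun _ _ _ _ => Iff.rfl

theorem symm (h : P.AgreeOn D Q) : Q.AgreeOn D P :=
  fun _ r t ht => (h r t ht).symm

theorem trans (h : P.AgreeOn D Q) (h' : Q.AgreeOn D S) : P.AgreeOn D S :=
  fun _ r t ht => (h r t ht).trans (h' r t ht)

theorem mono (hDE : D ⊆ E) (h : P.AgreeOn E Q) : P.AgreeOn D Q :=
  fun _ r t ht => h r t (hDE ht)

end AgreeOn

theorem agreeOn_union_iff : P.AgreeOn (D ∪ E) Q ↔ P.AgreeOn D Q ∧ P.AgreeOn E Q :=
  ⟨fun h => ⟨h.mono Finset.subset_union_left, h.mono Finset.subset_union_right⟩,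
    fun h _ r t ht => (Finset.mem_union.1 ht).elim (h.1 r t) (h.2 r t)⟩

theorem eq_of_agreeOn_powerset (hP : P.carrier = Z) (hQ : Q.carrier = Z)
    (h : P.AgreeOn Z.powerset Q) : P = Q := by
  refine ext (hP.trans hQ.symm) fun n r t => ?_
  by_cases ht : tupleRange t ⊆ Z
  · exact h r t (Finset.mem_powerset.2 ht)
  · exact iff_of_false (fun h => ht (hP ▸ tupleRange_subset_carrier h))
      (fun h => ht (hQ ▸ tupleRange_subset_carrier h))

theorem agreeOn_restrict (P : FinStruc L) (X : Finset ℕ) :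
    (P.restrict X).AgreeOn X.powerset P :=
  fun _ _ _ ht => and_iff_left (tupleRange_subset_iff.1 (Finset.mem_powerset.1 ht))

theorem carrier_restrict (h : X ⊆ P.carrier) : (P.restrict X).carrier = X :=
  Finset.inter_eq_right.2 h

theorem isInducedSub_iff_agreeOn :
    T.IsInducedSub S ↔ T.carrier ⊆ S.carrier ∧ T.AgreeOn T.carrier.powerset S := by
  simp only [IsInducedSub, AgreeOn, Finset.mem_powerset, tupleRange_subset_iff]

theorem isInducedSub_iff_restrict_eq : T.IsInducedSub S ↔
    T.carrier ⊆ S.carrier ∧ S.restrict T.carrier = T := by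
  rw [isInducedSub_iff_agreeOn]
  refine and_congr_right fun hTS => ⟨fun h => ?_, fun h => ?_⟩
  · exact eq_of_agreeOn_powerset (carrier_restrict hTS) rfl ((agreeOn_restrict S _).trans h.symm)
  · simpa only [h] using agreeOn_restrict S T.carrier

/-- The image of a finite structure under a permutation of `ℕ`. -/
def relabel (B : FinStruc L) (σ : Equiv.Perm ℕ) : FinStruc L where
  carrier := B.carrier.map σ.toEmbedding
  rel := fun _ r => {t | σ.symm ∘ t ∈ B.rel r}
  rel_mem := fun _ r _ ht i => Finset.mem_map_equiv.2 (B.rel_mem r _ ht i)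

/-- The structure with the tuples of `P` lying over `D` and all the tuples of `T`. -/
def glue (P : FinStruc L) (D : Finset (Finset ℕ)) (T : FinStruc L) : FinStruc L where
  carrier := P.carrier ∪ T.carrier
  rel := fun _ r => {t | tupleRange t ∈ D ∧ t ∈ P.rel r ∨ t ∈ T.rel r}
  rel_mem := fun _ r t ht i => Finset.mem_union.2 <|
    ht.imp (fun h => P.rel_mem r t h.2 i) (fun h => T.rel_mem r t h i)

section Glue

variable (h : P.AgreeOn (D.filter (· ⊆ T.carrier)) T)
include h

theorem glue_agreeOn_left : (P.glue D T).AgreeOn D P := fun _ r t htD =>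
  ⟨fun ht => ht.elim And.right fun htT =>
    (h r t (Finset.mem_filter.2 ⟨htD, tupleRange_subset_carrier htT⟩)).2 htT,
    fun ht => Or.inl ⟨htD, ht⟩⟩

theorem glue_agreeOn_right : (P.glue D T).AgreeOn T.carrier.powerset T :=
  fun _ r t htT => ⟨fun ht => ht.elim
    (fun htP => (h r t (Finset.mem_filter.2 ⟨htP.1, Finset.mem_powerset.1 htT⟩)).1 htP.2) id,
    Or.inr⟩

end Glue

end FinStruc

theorem sentence_realize_alls_rel_imp {M : Type*} [L.Structure M] {m : ℕ} (r : L.Relations m)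
    (ψ : L.BoundedFormula Empty m) :
    (M ⊨ (BoundedFormula.alls
      ((Relations.boundedFormula r fun k => Term.var (Sum.inr k)).imp ψ) : L.Sentence)) ↔
      ∀ x : Fin m → M, Structure.RelMap r x → ψ.Realize default x :=
  BoundedFormula.realize_alls

section LocalClass

variable [L.IsRelational] {K : Set (FinStruc L)}

open FinStruc

namespace IsLocalClass

theorem mem_of_forall_agreeOn (hK : IsLocalClass K) {C : FinStruc L}
    (h : ∀ {n : ℕ} (r : L.Relations n) (t : Fin n → ℕ), 0 < n → t ∈ C.rel r →
      ∃ A ∈ K, C.AgreeOn (tupleRange t).powerset A) : C ∈ K := by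
  obtain ⟨Φ, hΦ, -, rfl⟩ := hK
  intro φ hφ
  obtain ⟨m, hm, r, ψ, hψ, rfl⟩ := hΦ φ hφ
  refine (sentence_realize_alls_rel_imp r ψ).2 fun x hx => ?_
  obtain ⟨A, hA, hCA⟩ := h r (fun i => (x i : ℕ)) hm hx
  have hxA : (fun i => (x i : ℕ)) ∈ A.rel r := (hCA r _ (Finset.mem_powerset_self _)).1 hx
  let y : Fin m → {x : ℕ // x ∈ A.carrier} := fun i => ⟨x i, A.rel_mem r _ hxA i⟩
  have hyx : SameAtomicType L y x :=
    { eq_iff := fun i j => Subtype.mk_eq_mk.trans Subtype.ext_iff.symm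
      relMap_iff := fun r' f =>
        (hCA r' _ (Finset.mem_powerset.2 (tupleRange_comp_subset (fun i => (x i : ℕ)) f))).symm }
  exact ((hyx.sumElim_empty _ _).realize_iff hψ).1
    ((sentence_realize_alls_rel_imp r ψ).1 (hA _ hφ) y hxA)

theorem mem_of_equiv (hK : IsLocalClass K) {A C : FinStruc L} (hA : A ∈ K)
    (e : {x : ℕ // x ∈ C.carrier} ≃[L] {x : ℕ // x ∈ A.carrier}) : C ∈ K := by
  obtain ⟨Φ, -, -, rfl⟩ := hK
  exact fun φ hφ => (StrongHomClass.realize_sentence e φ).2 (hA φ hφ)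

theorem injective_of_mem_rel (hK : IsLocalClass K) {A : FinStruc L} (hA : A ∈ K) {n : ℕ}
    {r : L.Relations n} {t : Fin n → ℕ} (ht : t ∈ A.rel r) : Function.Injective t := by
  obtain ⟨Φ, -, hGI, rfl⟩ := hK
  intro i j hij
  by_contra hne
  have := (sentence_realize_alls_rel_imp r _).1 (hA _ (hGI ⟨n, r, i, j, hne, rfl⟩))
    (fun i => ⟨t i, A.rel_mem r t ht i⟩) ht
  simp only [BoundedFormula.realize_not, BoundedFormula.realize_bdEqual, Term.realize_var,
    Sum.elim_inr, Subtype.mk.injEq] at this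
  exact this hij

theorem card_tupleRange (hK : IsLocalClass K) {A : FinStruc L} (hA : A ∈ K) {n : ℕ}
    {r : L.Relations n} {t : Fin n → ℕ} (ht : t ∈ A.rel r) : (tupleRange t).card = n := by
  rw [tupleRange, Finset.card_image_of_injective _ (hK.injective_of_mem_rel hA ht),
    Finset.card_univ, Fintype.card_fin]

theorem restrict_mem (hK : IsLocalClass K) {A : FinStruc L} (hA : A ∈ K) (X : Finset ℕ) :
    A.restrict X ∈ K :=
  hK.mem_of_forall_agreeOn fun _ _ _ ht => ⟨A, hA, (agreeOn_restrict A X).mono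
    (Finset.powerset_mono.2 (tupleRange_subset_iff.2 ht.2))⟩

theorem relabel_mem (hK : IsLocalClass K) {B : FinStruc L} (hB : B ∈ K)
    (σ : Equiv.Perm ℕ) : B.relabel σ ∈ K :=
  hK.mem_of_equiv hB
    { σ.symm.subtypeEquiv fun _ => Finset.mem_map_equiv with
      map_fun' := fun f => isEmptyElim f
      map_rel' := fun _ _ => Iff.rfl }

/-- A tuple of the glued structure lies wholly in `P` or wholly in `T`, so a local sentence cannot
tell the glued structure from its two parts. -/
theorem glue_mem (hK : IsLocalClass K) {D : Finset (Finset ℕ)} {P T : FinStruc L}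
    (h : P.AgreeOn (D.filter (· ⊆ T.carrier)) T) (hD : IsLowerSet (D : Set (Finset ℕ)))
    (hP : P ∈ K) (hT : T ∈ K) : P.glue D T ∈ K := by
  refine hK.mem_of_forall_agreeOn fun r t _ ht => ?_
  rcases ht with ht | ht
  · exact ⟨P, hP, (glue_agreeOn_left h).mono fun Z hZ => hD (Finset.mem_powerset.1 hZ) ht.1⟩
  · exact ⟨T, hT, (glue_agreeOn_right h).mono
      (Finset.powerset_mono.2 (tupleRange_subset_carrier ht))⟩

theorem exists_mem_KNset_amalgam (hK : IsLocalClass K) {D : Finset (Finset ℕ)}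
    {P T : FinStruc L} (h : P.AgreeOn (D.filter (· ⊆ T.carrier)) T)
    (hD : IsLowerSet (D : Set (Finset ℕ))) {N : ℕ} (hP : P ∈ KNset K N) (hT : T ∈ K)
    (hTN : T.carrier ⊆ Finset.range N) :
    ∃ Q ∈ KNset K N, Q.AgreeOn D P ∧ T.IsInducedSub Q := by
  refine ⟨P.glue D T, ⟨hK.glue_mem h hD hP.1 hT, ?_⟩, glue_agreeOn_left h,
    isInducedSub_iff_agreeOn.2 ⟨Finset.subset_union_right, (glue_agreeOn_right h).symm⟩⟩
  exact (congrArg (· ∪ T.carrier) hP.2).trans (Finset.union_eq_left.2 hTN)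

end IsLocalClass

end LocalClass

section Counting

open FinStruc
open scoped Finset ENNReal

/-- The members of `K` with underlying set `Z`; `KNset K N` is the case `Z = {0, …, N - 1}`. -/
def structuresOn (K : Set (FinStruc L)) (Z : Finset ℕ) : Set (FinStruc L) :=
  {T | T ∈ K ∧ T.carrier = Z}

variable (L) in
/-- A bound for the number of structures without repeated entries in their tuples on a set of at
most `q` elements. -/
noncomputable def structureBound (q : ℕ) : ℕ :=
  Nat.card (∀ k : Fin (q + 1), L.Relations k → Set (Fin k → Fin q))

theorem structureBound_pos [∀ n, Finite (L.Relations n)] (q : ℕ) : 0 < structureBound L q :=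
  Nat.card_pos

/-- The fillings of `Z` over `P`: the members of `K` on `Z` that agree with `P` on the proper
subsets of `Z`. -/
def fillings (K : Set (FinStruc L)) (P : FinStruc L) (Z : Finset ℕ) : Set (FinStruc L) :=
  {T | T ∈ structuresOn K Z ∧ T.AgreeOn Z.ssubsets P}

/-- The number of fillings of `Z` over `P`. -/
noncomputable def fillingCount (K : Set (FinStruc L)) (P : FinStruc L) (Z : Finset ℕ) : ℕ :=
  (fillings K P Z).ncard

/-- The probability that the random structure agrees with `P` on `D`: the relations over each
`Z ∈ D` are a uniform choice among the fillings of `Z`. -/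
noncomputable def weight (K : Set (FinStruc L)) (D : Finset (Finset ℕ)) (P : FinStruc L) : ℝ≥0∞ :=
  ∏ Z ∈ D, (fillingCount K P Z : ℝ≥0∞)⁻¹

variable (L) in
/-- A lower bound for the probability of any given pattern on `m` points. -/
noncomputable def minWeight (m : ℕ) : ℝ≥0∞ :=
  (structureBound L m : ℝ≥0∞)⁻¹ ^ 2 ^ m

variable {K : Set (FinStruc L)} {P Q : FinStruc L} {D : Finset (Finset ℕ)} {Z : Finset ℕ} {q : ℕ}

theorem fillings_congr (h : P.AgreeOn Z.ssubsets Q) : fillings K P Z = fillings K Q Z :=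
  Set.ext fun _ => and_congr_right fun _ => ⟨fun hT => hT.trans h, fun hT => hT.trans h.symm⟩

theorem weight_congr (h : ∀ Z ∈ D, P.AgreeOn Z.ssubsets Q) : weight K D P = weight K D Q :=
  Finset.prod_congr rfl fun Z hZ => by rw [fillingCount, fillings_congr (h Z hZ), fillingCount]

theorem weight_ne_zero : weight K D P ≠ 0 :=
  Finset.prod_ne_zero_iff.2 fun _ _ => ENNReal.inv_ne_zero.2 (ENNReal.natCast_ne_top _)

variable [L.IsRelational]

namespace IsLocalClass

theorem exists_injOn_structuresOn (hK : IsLocalClass K) (hZ : #Z ≤ q) :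
    ∃ F : FinStruc L → ∀ k : Fin (q + 1), L.Relations k → Set (Fin k → Fin q),
      Set.InjOn F (structuresOn K Z) := by
  obtain ⟨Z', hZZ', hZ'⟩ := Infinite.exists_superset_card_eq Z q hZ
  let d := Z'.orderEmbOfFin hZ'
  refine ⟨fun T k r => {s | d ∘ s ∈ T.rel r}, fun T₁ h₁ T₂ h₂ hF => ?_⟩
  have hle : ∀ {T T' : FinStruc L}, T ∈ structuresOn K Z →
      (∀ (k : Fin (q + 1)) (r : L.Relations k) s, d ∘ s ∈ T.rel r → d ∘ s ∈ T'.rel r) →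
      ∀ ⦃n⦄ (r : L.Relations n) t, t ∈ T.rel r → t ∈ T'.rel r := by
    intro T T' hT hTT' n r t ht
    have htZ : tupleRange t ⊆ Z := hT.2 ▸ tupleRange_subset_carrier ht
    have hn : n ≤ q := hK.card_tupleRange hT.1 ht ▸ (Finset.card_le_card htZ).trans hZ
    have hd (i : Fin n) : ∃ j, d j = t i := by
      have : t i ∈ Set.range d := by
        rw [Finset.range_orderEmbOfFin]
        exact hZZ' (tupleRange_subset_iff.1 htZ i)
      exact this
    choose s hs using hd
    obtain rfl : d ∘ s = t := funext hs
    exact hTT' ⟨n, Nat.lt_succ_of_le hn⟩ r s ht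
  have hiff (k : Fin (q + 1)) (r : L.Relations k) (s : Fin k → Fin q) :
      d ∘ s ∈ T₁.rel r ↔ d ∘ s ∈ T₂.rel r := Set.ext_iff.1 (congrFun₂ hF k r) s
  exact FinStruc.ext (h₁.2.trans h₂.2.symm) fun n r t =>
    ⟨hle h₁ (fun k r s => (hiff k r s).1) r t, hle h₂ (fun k r s => (hiff k r s).2) r t⟩

theorem restrict_mem_fillings (hK : IsLocalClass K) (hP : P ∈ K) (hZ : Z ⊆ P.carrier) :
    P.restrict Z ∈ fillings K P Z :=
  ⟨⟨hK.restrict_mem hP Z, carrier_restrict hZ⟩, (agreeOn_restrict P Z).mono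
    (Finset.erase_subset _ _)⟩

variable [∀ n, Finite (L.Relations n)]

theorem finite_structuresOn (hK : IsLocalClass K) (Z : Finset ℕ) : (structuresOn K Z).Finite :=
  let ⟨_, hF⟩ := hK.exists_injOn_structuresOn (Z := Z) le_rfl
  .of_finite_image (Set.toFinite _) hF

theorem ncard_structuresOn_le (hK : IsLocalClass K) (hZ : #Z ≤ q) :
    (structuresOn K Z).ncard ≤ structureBound L q := by
  obtain ⟨F, hF⟩ := hK.exists_injOn_structuresOn hZ
  rw [← hF.ncard_image]
  exact Set.ncard_le_card _

theorem finite_fillings (hK : IsLocalClass K) (P : FinStruc L) (Z : Finset ℕ) :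
    (fillings K P Z).Finite :=
  (hK.finite_structuresOn Z).subset fun _ hT => hT.1

theorem fillingCount_pos (hK : IsLocalClass K) (hP : P ∈ K) (hZ : Z ⊆ P.carrier) :
    0 < fillingCount K P Z :=
  (Set.ncard_pos (hK.finite_fillings P Z)).2 ⟨_, hK.restrict_mem_fillings hP hZ⟩

theorem fillingCount_le (hK : IsLocalClass K) (hZ : #Z ≤ q) :
    fillingCount K P Z ≤ structureBound L q :=
  (Set.ncard_le_ncard (fun _ hT => hT.1) (hK.finite_structuresOn Z)).trans
    (hK.ncard_structuresOn_le hZ)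

theorem weight_ne_top (hK : IsLocalClass K) (hP : P ∈ K) (hD : ∀ Z ∈ D, Z ⊆ P.carrier) :
    weight K D P ≠ ⊤ :=
  ENNReal.prod_ne_top fun Z hZ => ENNReal.inv_ne_top.2 <|
    Nat.cast_ne_zero.2 (hK.fillingCount_pos hP (hD Z hZ)).ne'

theorem minWeight_le_weight (hK : IsLocalClass K) {m : ℕ} (hZ : #Z ≤ m) (hD : D ⊆ Z.powerset) :
    minWeight L m ≤ weight K D P := by
  have hbound : (structureBound L m : ℝ≥0∞)⁻¹ ≤ 1 :=
    ENNReal.inv_le_one.2 (Nat.one_le_cast.2 (structureBound_pos m))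
  have hcard : #D ≤ 2 ^ m := (Finset.card_le_card hD).trans <|
    (Finset.card_powerset Z).trans_le (Nat.pow_le_pow_right two_pos hZ)
  calc minWeight L m
    _ ≤ (structureBound L m : ℝ≥0∞)⁻¹ ^ #D := pow_le_pow_right_of_le_one' hbound hcard
    _ ≤ weight K D P := Finset.pow_card_le_prod _ _ _ fun Y hY => ENNReal.inv_le_inv.2 <|
      Nat.cast_le.2 <| hK.fillingCount_le <|
        (Finset.card_le_card (Finset.mem_powerset.1 (hD hY))).trans hZ

end IsLocalClass

end Counting

section Fibers

open MeasureTheory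
open scoped ENNReal

variable {α β : Type*} [MeasurableSpace α] [DiscreteMeasurableSpace α] {μ : Measure α}
  {U G : Set α} {f : α → β}

theorem measure_eq_sum_fibers {s : Finset β} (hf : Set.MapsTo f U s) :
    μ U = ∑ b ∈ s, μ (U ∩ f ⁻¹' {b}) := by
  have h := sum_measure_preimage_singleton (μ := μ.restrict U) (f := f) s
    fun _ _ => MeasurableSet.of_discrete
  simp only [Measure.restrict_apply MeasurableSet.of_discrete, Set.inter_comm _ U] at h
  rw [h, Set.inter_eq_left.2 (show U ⊆ f ⁻¹' s from hf)]

theorem measure_sdiff_le_of_fibers (hU : U.Finite) (hμU : μ U ≠ ⊤) {ε : ℝ≥0∞}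
    (h : ∀ x ∈ U, ε * μ (U ∩ f ⁻¹' {f x}) ≤ μ (U ∩ f ⁻¹' {f x} ∩ G)) :
    μ (U \ G) ≤ (1 - ε) * μ U := by
  classical
  set s := (hU.image f).toFinset
  have hs : Set.MapsTo f U s := fun x hx => (hU.image f).mem_toFinset.2 ⟨x, hx, rfl⟩
  have hG : ε * μ U ≤ μ (U ∩ G) := by
    rw [measure_eq_sum_fibers hs, measure_eq_sum_fibers (hs.mono_left Set.inter_subset_left),
      Finset.mul_sum]
    refine Finset.sum_le_sum fun b hb => ?_
    obtain ⟨x, hx, rfl⟩ := (hU.image f).mem_toFinset.1 hb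
    rw [Set.inter_right_comm]
    exact h x hx
  have hadd : μ (U ∩ G) + μ (U \ G) = μ U := measure_inter_add_sdiff U .of_discrete
  calc μ (U \ G) = μ U - μ (U ∩ G) :=
        ENNReal.eq_sub_of_add_eq (measure_ne_top_of_subset Set.inter_subset_left hμU)
          (by rw [add_comm, hadd])
    _ ≤ μ U - ε * μ U := tsub_le_tsub_left hG _
    _ = (1 - ε) * μ U := by rw [ENNReal.sub_mul fun _ _ => hμU, one_mul]

end Fibers

section Cylinders

open FinStruc
open MeasureTheory (Measure)
open scoped Finset ENNReal

/-- The members of `KNset K N` that agree with `P` on `D`. -/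
def cylinder (K : Set (FinStruc L)) (N : ℕ) (D : Finset (Finset ℕ)) (P : FinStruc L) :
    Set (FinStruc L) :=
  {S | S ∈ KNset K N ∧ S.AgreeOn D P}

variable {K : Set (FinStruc L)} {N : ℕ} {D E : Finset (Finset ℕ)} {P Q T : FinStruc L}
  {Z : Finset ℕ}

theorem cylinder_congr (h : P.AgreeOn D Q) : cylinder K N D P = cylinder K N D Q :=
  Set.ext fun _ => and_congr_right fun _ => ⟨fun hS => hS.trans h, fun hS => hS.trans h.symm⟩

theorem mem_cylinder_self (hP : P ∈ KNset K N) : P ∈ cylinder K N D P :=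
  ⟨hP, .refl P D⟩

theorem isInducedSub_iff_agreeOn_of_mem_KNset (hTN : T.carrier ⊆ Finset.range N)
    (hP : P ∈ KNset K N) : T.IsInducedSub P ↔ P.AgreeOn T.carrier.powerset T := by
  rw [isInducedSub_iff_agreeOn, hP.2, and_iff_right hTN]
  exact ⟨AgreeOn.symm, AgreeOn.symm⟩

theorem cylinder_union_powerset (hTN : T.carrier ⊆ Finset.range N) (hQD : Q.AgreeOn D P)
    (hQT : T.IsInducedSub Q) :
    cylinder K N (D ∪ T.carrier.powerset) Q = cylinder K N D P ∩ {S | T.IsInducedSub S} := by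
  rw [isInducedSub_iff_agreeOn] at hQT
  ext S
  rw [← cylinder_congr hQD]
  simp only [cylinder, Set.mem_ofPred_eq, Set.mem_inter_iff, agreeOn_union_iff, and_assoc]
  refine and_congr_right fun hS => and_congr_right fun _ => ?_
  rw [isInducedSub_iff_agreeOn_of_mem_KNset hTN hS]
  exact ⟨fun h => h.trans hQT.2.symm, fun h => h.trans hQT.2⟩

theorem union_powerset_eq_insert (hZ : Z.ssubsets ⊆ D) : D ∪ Z.powerset = insert Z D := by
  rw [← Finset.insert_erase (Finset.mem_powerset_self Z), Finset.union_insert]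
  exact congrArg (insert Z) (Finset.union_eq_left.2 hZ)

theorem isLowerSet_powerset (Z : Finset ℕ) : IsLowerSet (Z.powerset : Set (Finset ℕ)) :=
  fun _ _ hYX hX => Finset.mem_powerset.2 (hYX.trans (Finset.mem_powerset.1 hX))

theorem isLowerSet_union_powerset (hD : IsLowerSet (D : Set (Finset ℕ))) (Z : Finset ℕ) :
    IsLowerSet ((D ∪ Z.powerset : Finset (Finset ℕ)) : Set (Finset ℕ)) := by
  rw [Finset.coe_union]
  exact hD.union (isLowerSet_powerset Z)

variable [L.IsRelational] [∀ n, Finite (L.Relations n)] [MeasurableSpace (FinStruc L)]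
  [DiscreteMeasurableSpace (FinStruc L)] {μ : Measure (FinStruc L)}

namespace IsLocalClass

theorem measure_cylinder_eq_fillingCount_mul (hK : IsLocalClass K)
    (hD : IsLowerSet (D : Set (Finset ℕ))) (hZN : Z ⊆ Finset.range N) (hZD : Z ∉ D)
    (hZ : Z.ssubsets ⊆ D) (hP : P ∈ KNset K N) {c : ℝ≥0∞}
    (hc : ∀ Q ∈ cylinder K N D P, μ (cylinder K N (insert Z D) Q) = c) :
    μ (cylinder K N D P) = fillingCount K P Z * c := by
  have hmaps : Set.MapsTo (·.restrict Z) (cylinder K N D P)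
      (hK.finite_fillings P Z).toFinset := by
    intro S hS
    rw [Set.Finite.coe_toFinset, ← fillings_congr (hS.2.mono hZ)]
    exact hK.restrict_mem_fillings hS.1.1 (hZN.trans_eq hS.1.2.symm)
  have hfiber : ∀ T ∈ fillings K P Z,
      μ (cylinder K N D P ∩ (·.restrict Z) ⁻¹' {T}) = c := by
    rintro T ⟨⟨hT, rfl⟩, hTP⟩
    have hPT : P.AgreeOn (D.filter (· ⊆ T.carrier)) T := hTP.symm.mono fun Y hY => by
      rw [Finset.mem_filter] at hY
      exact Finset.mem_ssubsets.2 (hY.2.ssubset_of_ne fun h => hZD (h ▸ hY.1))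
    obtain ⟨Q, hQ, hQP, hTQ⟩ := hK.exists_mem_KNset_amalgam hPT hD hP hT hZN
    rw [← hc Q ⟨hQ, hQP⟩, ← union_powerset_eq_insert hZ, cylinder_union_powerset hZN hQP hTQ]
    congr 1
    ext S
    refine and_congr_right fun hS => ?_
    simp only [isInducedSub_iff_restrict_eq, hS.1.2, hZN, Set.mem_preimage, Set.mem_singleton_iff,
      Set.mem_ofPred_eq, true_and]
  rw [measure_eq_sum_fibers hmaps, Finset.sum_congr rfl fun T hT =>
      hfiber T ((hK.finite_fillings P Z).mem_toFinset.1 hT),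
    Finset.sum_const, nsmul_eq_mul, fillingCount,
    Set.ncard_eq_toFinset_card _ (hK.finite_fillings P Z)]

/-- The relations over the sets of `E` that are not in `D` can be revealed one set at a time, and
each of the possible fillings of the revealed set carries the same mass. -/
theorem measure_cylinder_eq_of_weight_sdiff (hK : IsLocalClass K)
    (hE : IsLowerSet (E : Set (Finset ℕ))) (hEN : E ⊆ (Finset.range N).powerset)
    (hD : IsLowerSet (D : Set (Finset ℕ))) (hDE : D ⊆ E) (hP : P ∈ KNset K N) {c : ℝ≥0∞}
    (hc : ∀ Q ∈ cylinder K N D P, μ (cylinder K N E Q) = c * weight K (E \ D) Q) :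
    μ (cylinder K N D P) = c := by
  induction hn : #(E \ D) generalizing D P c with
  | zero =>
    obtain rfl : D = E :=
      hDE.antisymm (Finset.sdiff_eq_empty_iff_subset.1 (Finset.card_eq_zero.1 hn))
    simpa only [sdiff_self, weight, Finset.bot_eq_empty, Finset.prod_empty, mul_one]
      using hc P (mem_cylinder_self hP)
  | succ n ih =>
    obtain ⟨Z, hZmin⟩ := (E \ D).exists_minimal (Finset.card_pos.1 (hn ▸ n.succ_pos))
    obtain ⟨hZE, hZD⟩ := Finset.mem_sdiff.1 hZmin.prop
    have hZN : Z ⊆ Finset.range N := Finset.mem_powerset.1 (hEN hZE)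
    have hZ : Z.ssubsets ⊆ D := fun Y hY => by
      rw [Finset.mem_ssubsets] at hY
      by_contra hYD
      exact hZmin.not_lt (Finset.mem_sdiff.2 ⟨hE hY.1 hZE, hYD⟩) hY
    have hlower : IsLowerSet ((insert Z D : Finset (Finset ℕ)) : Set (Finset ℕ)) :=
      union_powerset_eq_insert hZ ▸ isLowerSet_union_powerset hD Z
    have hsdiff : E \ D = insert Z (E \ insert Z D) := by
      rw [Finset.sdiff_insert, Finset.insert_erase hZmin.prop]
    have hcard : #(E \ insert Z D) = n := by
      rw [Finset.sdiff_insert, Finset.card_erase_of_mem hZmin.prop, hn, Nat.add_sub_cancel]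
    have hcount : (fillingCount K P Z : ℝ≥0∞) ≠ 0 :=
      Nat.cast_ne_zero.2 (hK.fillingCount_pos hP.1 (hZN.trans_eq hP.2.symm)).ne'
    rw [hK.measure_cylinder_eq_fillingCount_mul (c := c * (fillingCount K P Z : ℝ≥0∞)⁻¹) hD hZN hZD
      hZ hP fun Q hQ => ?_, mul_left_comm,
      ENNReal.mul_inv_cancel hcount (ENNReal.natCast_ne_top _), mul_one]
    refine ih hlower (Finset.insert_subset hZE hDE) hQ.1 (fun S hS => ?_) hcard
    have hSP : S.AgreeOn D P := (hS.2.mono (Finset.subset_insert Z D)).trans hQ.2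
    rw [hc S ⟨hS.1, hSP⟩, hsdiff, weight, Finset.prod_insert (by simp), ← weight, fillingCount,
      fillings_congr (hSP.mono hZ), fillingCount, mul_assoc]

end IsLocalClass

end Cylinders

section FramewiseUniform

open FinStruc
open MeasureTheory (Measure)
open scoped Finset ENNReal

variable {K : Set (FinStruc L)} {N k : ℕ} {D : Finset (Finset ℕ)} {P Q S T : FinStruc L}

/-- `μ` is a frame-wise uniform measure on `KNset K N`: it is concentrated on this set and obeys
the recursion defining `μ_N` for the basic events of the members of `K` with underlying set
`{0, …, N - 1}`. -/
structure IsFramewiseUniform [MeasurableSpace (FinStruc L)] (K : Set (FinStruc L)) (N : ℕ)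
    (μ : Measure (FinStruc L)) : Prop where
  measure_KNset : μ (KNset K N) = 1
  measure_ONset_zero : ∀ A ∈ KNset K N, μ (ONset K N A 0) = 1
  measure_ONset_succ : ∀ A ∈ KNset K N, ∀ k : ℕ,
    μ (ONset K N A (k + 1)) = μ (ONset K N A k) / (Ncount K A k : ℝ≥0∞)

theorem IsFramewiseUniform.nonempty_KNset [MeasurableSpace (FinStruc L)] {μ : Measure (FinStruc L)}
    (hμ : IsFramewiseUniform K N μ) : (KNset K N).Nonempty :=
  MeasureTheory.nonempty_of_measure_ne_zero (hμ.measure_KNset ▸ one_ne_zero)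

/-- The subsets of `{0, …, N - 1}` with at most `k` elements. -/
def smallSubsets (N k : ℕ) : Finset (Finset ℕ) :=
  (Finset.range N).powerset.filter (#· ≤ k)

theorem mem_smallSubsets {Z : Finset ℕ} : Z ∈ smallSubsets N k ↔ Z ⊆ Finset.range N ∧ #Z ≤ k := by
  rw [smallSubsets, Finset.mem_filter, Finset.mem_powerset]

theorem isLowerSet_smallSubsets (N k : ℕ) : IsLowerSet (smallSubsets N k : Set (Finset ℕ)) :=
  fun _ _ hYZ hZ => by
    rw [Finset.mem_coe, mem_smallSubsets] at hZ ⊢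
    exact ⟨hYZ.trans hZ.1, (Finset.card_le_card hYZ).trans hZ.2⟩

theorem smallSubsets_subset_powerset (N k : ℕ) : smallSubsets N k ⊆ (Finset.range N).powerset :=
  Finset.filter_subset _ _

theorem smallSubsets_subset_succ (N k : ℕ) : smallSubsets N k ⊆ smallSubsets N (k + 1) :=
  Finset.monotone_filter_right _ fun _ _ => Nat.le_succ_of_le

theorem smallSubsets_zero (N : ℕ) : smallSubsets N 0 = {∅} := by
  ext Z
  simp only [mem_smallSubsets, nonpos_iff_eq_zero, Finset.card_eq_zero, Finset.mem_singleton,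
    and_iff_right_iff_imp]
  rintro rfl
  exact Finset.empty_subset _

theorem smallSubsets_self (N : ℕ) : smallSubsets N N = (Finset.range N).powerset :=
  Finset.filter_true_of_mem fun _ hZ =>
    (Finset.card_le_card (Finset.mem_powerset.1 hZ)).trans_eq (Finset.card_range N)

theorem ssubsets_subset_smallSubsets {Z : Finset ℕ} (hZ : Z ∈ smallSubsets N (k + 1)) :
    Z.ssubsets ⊆ smallSubsets N k := fun Y hY => by
  rw [Finset.mem_ssubsets] at hY
  rw [mem_smallSubsets] at hZ ⊢
  exact ⟨hY.1.trans hZ.1, Nat.le_of_lt_succ ((Finset.card_lt_card hY).trans_le hZ.2)⟩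

theorem FinStruc.mem_rel_frame {n : ℕ} {r : L.Relations n} {t : Fin n → ℕ} :
    t ∈ (P.frame k).rel r ↔ n ≤ k ∧ t ∈ P.rel r := by
  by_cases hn : n ≤ k <;> simp [frame, hn]

theorem FinStruc.restrict_carrier_self (P : FinStruc L) : P.restrict P.carrier = P :=
  (isInducedSub_iff_restrict_eq.1 ⟨subset_rfl, fun _ _ _ _ => Iff.rfl⟩).2

variable [L.IsRelational]

namespace IsLocalClass

theorem agreeOn_smallSubsets_iff (hK : IsLocalClass K) (hS : S ∈ KNset K N)
    (hP : P ∈ KNset K N) : S.AgreeOn (smallSubsets N k) P ↔ S.frame k = P.frame k := by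
  constructor
  · refine fun h => FinStruc.ext (hS.2.trans hP.2.symm) fun n r t => ?_
    rw [mem_rel_frame, mem_rel_frame]
    refine and_congr_right fun hn => ?_
    by_cases ht : tupleRange t ⊆ Finset.range N
    · have hcard : #(tupleRange t) ≤ n := Finset.card_image_le.trans_eq (Finset.card_fin n)
      exact h r t (mem_smallSubsets.2 ⟨ht, hcard.trans hn⟩)
    · exact iff_of_false (fun htS => ht (hS.2 ▸ tupleRange_subset_carrier htS))
        (fun htP => ht (hP.2 ▸ tupleRange_subset_carrier htP))
  · intro h n r t ht
    have hle {A : FinStruc L} (hA : A ∈ K) : t ∈ A.rel r ↔ t ∈ (A.frame k).rel r := by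
      rw [mem_rel_frame, iff_and_self]
      exact fun htA => hK.card_tupleRange hA htA ▸ (mem_smallSubsets.1 ht).2
    rw [hle hS.1, hle hP.1, h]

theorem ONset_eq_cylinder (hK : IsLocalClass K) (hP : P ∈ KNset K N) (k : ℕ) :
    ONset K N P k = cylinder K N (smallSubsets N k) P := by
  ext S
  refine and_congr_right fun hS => ?_
  have hcarrier : P.carrier = (S.frame k).carrier := hP.2.trans hS.2.symm
  rw [hK.agreeOn_smallSubsets_iff hS hP, hcarrier, restrict_carrier_self]

theorem mem_of_carrier_eq_empty (hK : IsLocalClass K) (hP : P.carrier = ∅) : P ∈ K :=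
  hK.mem_of_forall_agreeOn fun r t hn ht =>
    (Finset.notMem_empty _ (hP ▸ P.rel_mem r t ht ⟨0, hn⟩)).elim

theorem isEmpty_relations_zero (hK : IsLocalClass K) (h : fillingCount K P ∅ = 1) :
    IsEmpty (L.Relations 0) := by
  refine ⟨fun r => ?_⟩
  let C (p : Prop) : FinStruc L :=
    { carrier := ∅
      rel := fun n _ => {_t | n = 0 ∧ p}
      rel_mem := by
        rintro n - t ⟨rfl, -⟩ i
        exact i.elim0 }
  have hC (p : Prop) : C p ∈ fillings K P ∅ :=
    ⟨⟨hK.mem_of_carrier_eq_empty rfl, rfl⟩, fun _ _ _ ht => (Finset.notMem_empty _ ht).elim⟩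
  obtain ⟨T, hT⟩ := Set.ncard_eq_one.1 h
  have hC_eq (p : Prop) : C p = T := hT.subset (hC p)
  have hmem : Fin.elim0 ∈ (C False).rel r := by
    rw [hC_eq False, ← hC_eq True]
    exact ⟨rfl, trivial⟩
  exact hmem.2

end IsLocalClass

namespace IsFramewiseUniform

variable [∀ n, Finite (L.Relations n)] [MeasurableSpace (FinStruc L)]
  [DiscreteMeasurableSpace (FinStruc L)] {μ : Measure (FinStruc L)}

theorem fillingCount_empty (hμ : IsFramewiseUniform K N μ) (hK : IsLocalClass K)
    (hP : P ∈ KNset K N) : fillingCount K P ∅ = 1 := by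
  have hcyl : cylinder K N ∅ P = KNset K N :=
    Set.Subset.antisymm (fun _ hS => hS.1) fun _ hS =>
      ⟨hS, fun _ _ _ ht => (Finset.notMem_empty _ ht).elim⟩
  have h := hK.measure_cylinder_eq_fillingCount_mul (μ := μ) (D := ∅) (Z := ∅) (c := 1)
    (by simp [IsLowerSet]) (Finset.empty_subset _) (Finset.notMem_empty _) subset_rfl hP
    fun Q hQ => by
      rw [insert_empty_eq, ← smallSubsets_zero N, ← hK.ONset_eq_cylinder hQ.1,
        hμ.measure_ONset_zero Q hQ.1]
  rw [hcyl, hμ.measure_KNset, mul_one] at h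
  exact_mod_cast h.symm

theorem measure_cylinder_smallSubsets (hμ : IsFramewiseUniform K N μ) (hK : IsLocalClass K)
    (k : ℕ) {P : FinStruc L} (hP : P ∈ KNset K N) :
    μ (cylinder K N (smallSubsets N k) P) = weight K (smallSubsets N k) P := by
  induction k generalizing P with
  | zero =>
    rw [← hK.ONset_eq_cylinder hP, hμ.measure_ONset_zero P hP, smallSubsets_zero, weight,
      Finset.prod_singleton, hμ.fillingCount_empty hK hP, Nat.cast_one, inv_one]
  | succ k ih =>
    have hrec {Q : FinStruc L} (hQ : Q ∈ KNset K N) :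
        μ (cylinder K N (smallSubsets N (k + 1)) Q) =
          μ (cylinder K N (smallSubsets N k) Q) / Ncount K Q k := by
      rw [← hK.ONset_eq_cylinder hQ, hμ.measure_ONset_succ Q hQ, hK.ONset_eq_cylinder hQ]
    set W := weight K (smallSubsets N (k + 1) \ smallSubsets N k) P
    have hW_ne_top : W ≠ ⊤ := hK.weight_ne_top hP.1 fun Z hZ =>
      (mem_smallSubsets.1 (Finset.sdiff_subset hZ)).1.trans_eq hP.2.symm
    have hconst : ∀ Q ∈ cylinder K N (smallSubsets N k) P,
        μ (cylinder K N (smallSubsets N (k + 1)) Q) =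
          μ (cylinder K N (smallSubsets N (k + 1)) P) / W *
            weight K (smallSubsets N (k + 1) \ smallSubsets N k) Q := by
      intro Q hQ
      have hW : weight K (smallSubsets N (k + 1) \ smallSubsets N k) Q = W := weight_congr
        fun Z hZ => hQ.2.mono (ssubsets_subset_smallSubsets (Finset.sdiff_subset hZ))
      have hframe : Q.frame k = P.frame k := (hK.agreeOn_smallSubsets_iff hQ.1 hP).1 hQ.2
      have hNcount : Ncount K Q k = Ncount K P k := by
        rw [Ncount, Ncount, KsetFr, KsetFr, hQ.1.2, hP.2, hframe]
      rw [hW, ENNReal.div_mul_cancel weight_ne_zero hW_ne_top, hrec hQ.1, hrec hP,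
        cylinder_congr hQ.2, hNcount]
    have hdiv := hK.measure_cylinder_eq_of_weight_sdiff (isLowerSet_smallSubsets N (k + 1))
      (smallSubsets_subset_powerset N (k + 1)) (isLowerSet_smallSubsets N k)
      (smallSubsets_subset_succ N k) hP hconst
    calc μ (cylinder K N (smallSubsets N (k + 1)) P)
      _ = μ (cylinder K N (smallSubsets N k) P) * W := by
        rw [hdiv, ENNReal.div_mul_cancel weight_ne_zero hW_ne_top]
      _ = W * weight K (smallSubsets N k) P := by rw [ih hP, mul_comm]
      _ = weight K (smallSubsets N (k + 1)) P := Finset.prod_sdiff (smallSubsets_subset_succ N k)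

theorem measure_cylinder (hμ : IsFramewiseUniform K N μ) (hK : IsLocalClass K)
    (hD : IsLowerSet (D : Set (Finset ℕ))) (hDN : D ⊆ (Finset.range N).powerset)
    (hP : P ∈ KNset K N) : μ (cylinder K N D P) = weight K D P := by
  refine hK.measure_cylinder_eq_of_weight_sdiff
    (isLowerSet_powerset _) subset_rfl hD hDN hP fun Q hQ => ?_
  have hPQ : weight K D P = weight K D Q := weight_congr fun Z hZ => hQ.2.symm.mono fun Y hY =>
    hD (Finset.mem_ssubsets.1 hY).1 hZ
  rw [← smallSubsets_self, hμ.measure_cylinder_smallSubsets hK N hQ.1, smallSubsets_self, hPQ,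
    mul_comm]
  exact (Finset.prod_sdiff hDN).symm

theorem minWeight_mul_measure_cylinder_le (hμ : IsFramewiseUniform K N μ) (hK : IsLocalClass K)
    (hD : IsLowerSet (D : Set (Finset ℕ))) (hDN : D ⊆ (Finset.range N).powerset)
    (hP : P ∈ KNset K N) (hT : T ∈ K) (hTN : T.carrier ⊆ Finset.range N)
    (hPT : P.AgreeOn (D.filter (· ⊆ T.carrier)) T) {m : ℕ} (hm : #T.carrier ≤ m) :
    minWeight L m * μ (cylinder K N D P) ≤
      μ (cylinder K N D P ∩ {S | T.IsInducedSub S}) := by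
  obtain ⟨Q, hQ, hQP, hTQ⟩ := hK.exists_mem_KNset_amalgam hPT hD hP hT hTN
  rw [← cylinder_union_powerset hTN hQP hTQ, ← cylinder_congr hQP,
    hμ.measure_cylinder hK hD hDN hQ, hμ.measure_cylinder hK (isLowerSet_union_powerset hD _)
      (Finset.union_subset hDN (Finset.powerset_mono.2 hTN)) hQ]
  calc minWeight L m * weight K D Q
    _ ≤ weight K ((D ∪ T.carrier.powerset) \ D) Q * weight K D Q := by
      gcongr
      refine hK.minWeight_le_weight hm ?_
      rw [Finset.union_sdiff_left]
      exact Finset.sdiff_subset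
    _ = weight K (D ∪ T.carrier.powerset) Q := Finset.prod_sdiff Finset.subset_union_left

end IsFramewiseUniform

end FramewiseUniform

section ExtensionProperty

open FinStruc
open MeasureTheory (Measure)
open scoped Finset

variable {K : Set (FinStruc L)} {N : ℕ} {X Y : Finset ℕ} {B S : FinStruc L} {a b : ℕ}

namespace FinStruc

theorem symm_swap_comp_of_subset {n : ℕ} {t : Fin n → ℕ} (ha : a ∉ X) (hb : b ∉ X)
    (ht : tupleRange t ⊆ X) : (Equiv.swap a b).symm ∘ t = t :=
  funext fun i =>
    have hi := tupleRange_subset_iff.1 ht i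
    Equiv.swap_apply_of_ne_of_ne (ne_of_mem_of_not_mem hi ha) (ne_of_mem_of_not_mem hi hb)

theorem agreeOn_relabel_swap (B : FinStruc L) (ha : a ∉ X) (hb : b ∉ X) :
    (B.relabel (Equiv.swap a b)).AgreeOn X.powerset B := fun _ r t ht => by
  change (Equiv.swap a b).symm ∘ t ∈ B.rel r ↔ t ∈ B.rel r
  rw [symm_swap_comp_of_subset ha hb (Finset.mem_powerset.1 ht)]

theorem carrier_relabel_swap (hB : B.carrier = insert a X) (ha : a ∉ X) (hb : b ∉ X) :
    (B.relabel (Equiv.swap a b)).carrier = insert b X := by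
  have hX : X.map (Equiv.swap a b).toEmbedding = X := by
    rw [Finset.map_eq_image]
    exact (Finset.image_congr fun x hx => Equiv.swap_apply_of_ne_of_ne
      (ne_of_mem_of_not_mem hx ha) (ne_of_mem_of_not_mem hx hb)).trans Finset.image_id
  change B.carrier.map _ = _
  rw [hB, Finset.map_insert, hX, Equiv.coe_toEmbedding, Equiv.swap_apply_left]

end FinStruc

/-- The extension property for sets of `m` points: whenever `S` induces on `X` the structure
`B.restrict X`, where `B ∈ K` has one point more than `X`, some point of `S` extends this to a copy
of `B`. The additional point of `B` is named `N`, a number outside the underlying set of `S`. -/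
def HasExtensions (K : Set (FinStruc L)) (N m : ℕ) (S : FinStruc L) : Prop :=
  ∀ X ⊆ Finset.range N, #X = m → ∀ B ∈ structuresOn K (insert N X), S.AgreeOn X.powerset B →
    ∃ y ∈ Finset.range N \ X, S.AgreeOn (insert y X).powerset (B.relabel (Equiv.swap N y))

/-- The members of `KNset K N` that agree with `B` on `X`, and in which no `y ∈ Y` plays the role
of the additional point `N` of `B`. -/
def unrealized (K : Set (FinStruc L)) (N : ℕ) (X : Finset ℕ) (B : FinStruc L) (Y : Finset ℕ) :
    Set (FinStruc L) :=
  {S | S ∈ KNset K N ∧ S.AgreeOn X.powerset B ∧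
    ∀ y ∈ Y, ¬ S.AgreeOn (insert y X).powerset (B.relabel (Equiv.swap N y))}

/-- The subsets of `X` and of the sets `insert y X` with `y ∈ Y`: the information on which
membership in `unrealized K N X B Y` depends. -/
def starFamily (X Y : Finset ℕ) : Finset (Finset ℕ) :=
  X.powerset ∪ Y.biUnion fun y => (insert y X).powerset

theorem isLowerSet_starFamily (X Y : Finset ℕ) :
    IsLowerSet (starFamily X Y : Set (Finset ℕ)) := by
  rw [starFamily, Finset.coe_union, Finset.coe_biUnion]
  exact (isLowerSet_powerset X).union (isLowerSet_iUnion₂ fun y _ => isLowerSet_powerset _)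

theorem powerset_insert_subset_starFamily {y : ℕ} (hy : y ∈ Y) :
    (insert y X).powerset ⊆ starFamily X Y :=
  (Finset.subset_biUnion_of_mem (fun y => (insert y X).powerset) hy).trans
    Finset.subset_union_right

theorem starFamily_subset_powerset {Z : Finset ℕ} (hX : X ⊆ Z) (hY : Y ⊆ Z) :
    starFamily X Y ⊆ Z.powerset :=
  Finset.union_subset (Finset.powerset_mono.2 hX) <| Finset.biUnion_subset.2 fun _ hy =>
    Finset.powerset_mono.2 (Finset.insert_subset (hY hy) hX)

theorem filter_starFamily_subset {y : ℕ} (hy : y ∉ Y) :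
    (starFamily X Y).filter (· ⊆ insert y X) ⊆ X.powerset := fun Z hZ => by
  obtain ⟨hZ, hZy⟩ := Finset.mem_filter.1 hZ
  rcases Finset.mem_union.1 hZ with hZX | hZ
  · exact hZX
  · obtain ⟨y', hy', hZy'⟩ := Finset.mem_biUnion.1 hZ
    refine Finset.mem_powerset.2 fun z hz => ?_
    rcases Finset.mem_insert.1 (hZy hz) with rfl | hzX
    · exact (Finset.mem_insert.1 (Finset.mem_powerset.1 hZy' hz)).resolve_left
        (ne_of_mem_of_not_mem hy' hy).symm
    · exact hzX

theorem mem_unrealized_of_agreeOn {S' : FinStruc L} (hS : S ∈ unrealized K N X B Y)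
    (hS' : S' ∈ KNset K N) (h : S'.AgreeOn (starFamily X Y) S) : S' ∈ unrealized K N X B Y :=
  ⟨hS', (h.mono Finset.subset_union_left).trans hS.2.1, fun y hy hy' =>
    hS.2.2 y hy ((h.symm.mono (powerset_insert_subset_starFamily hy)).trans hy')⟩

variable (L) in
theorem one_sub_minWeight_lt_one (m : ℕ) : 1 - minWeight L m < 1 :=
  ENNReal.sub_lt_self ENNReal.one_ne_top one_ne_zero
    (pow_ne_zero _ (ENNReal.inv_ne_zero.2 (ENNReal.natCast_ne_top _)))

variable [L.IsRelational] [∀ n, Finite (L.Relations n)]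

theorem IsLocalClass.finite_KNset (hK : IsLocalClass K) (N : ℕ) : (KNset K N).Finite :=
  hK.finite_structuresOn (Finset.range N)

namespace IsFramewiseUniform

variable [MeasurableSpace (FinStruc L)] [DiscreteMeasurableSpace (FinStruc L)]
  {μ : Measure (FinStruc L)}

theorem measure_unrealized_insert_le (hμ : IsFramewiseUniform K N μ) (hK : IsLocalClass K)
    (hX : X ⊆ Finset.range N) (hB : B ∈ structuresOn K (insert N X)) {y : ℕ}
    (hyY : insert y Y ⊆ Finset.range N \ X) (hy : y ∉ Y) :
    μ (unrealized K N X B (insert y Y)) ≤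
      (1 - minWeight L (#X + 1)) * μ (unrealized K N X B Y) := by
  obtain ⟨hyN, hyX⟩ := Finset.mem_sdiff.1 (hyY (Finset.mem_insert_self y Y))
  have hYN : Y ⊆ Finset.range N :=
    (Finset.subset_insert y Y).trans (hyY.trans Finset.sdiff_subset)
  have hNX : N ∉ X := fun h => Finset.notMem_range_self (hX h)
  set T := B.relabel (Equiv.swap N y)
  have hTcarrier : T.carrier = insert y X := carrier_relabel_swap hB.2 hNX hyX
  have hTN : T.carrier ⊆ Finset.range N := hTcarrier ▸ Finset.insert_subset hyN hX
  have hsdiff : unrealized K N X B (insert y Y) =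
      unrealized K N X B Y \ {S | T.IsInducedSub S} := by
    ext S
    simp only [unrealized, Set.mem_ofPred_eq, Set.mem_sdiff, Finset.forall_mem_insert, and_assoc]
    refine and_congr_right fun hS => and_congr_right fun _ => ?_
    rw [isInducedSub_iff_agreeOn_of_mem_KNset hTN hS, hTcarrier, and_comm]
  rw [hsdiff]
  refine measure_sdiff_le_of_fibers (f := cylinder K N (starFamily X Y))
    ((hK.finite_KNset N).subset fun S hS => hS.1)
    (MeasureTheory.measure_ne_top_of_subset (fun S hS => hS.1)
      (hμ.measure_KNset ▸ ENNReal.one_ne_top)) fun P hP => ?_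
  have hfiber : unrealized K N X B Y ∩
      cylinder K N (starFamily X Y) ⁻¹' {cylinder K N (starFamily X Y) P} =
        cylinder K N (starFamily X Y) P := by
    refine Set.Subset.antisymm (fun S hS => ?_) fun S hS =>
      ⟨mem_unrealized_of_agreeOn hP hS.1 hS.2, cylinder_congr hS.2⟩
    exact (Set.mem_singleton_iff.1 hS.2).subset (mem_cylinder_self hS.1.1)
  rw [hfiber]
  refine hμ.minWeight_mul_measure_cylinder_le hK (isLowerSet_starFamily X Y)
    (starFamily_subset_powerset hX hYN) hP.1 (hK.relabel_mem hB.1 _) hTN ?_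
    (hTcarrier ▸ Finset.card_insert_le y X)
  rw [hTcarrier]
  exact (hP.2.1.trans (agreeOn_relabel_swap B hNX hyX).symm).mono (filter_starFamily_subset hy)

theorem measure_unrealized_le (hμ : IsFramewiseUniform K N μ) (hK : IsLocalClass K)
    (hX : X ⊆ Finset.range N) (hB : B ∈ structuresOn K (insert N X))
    (hY : Y ⊆ Finset.range N \ X) :
    μ (unrealized K N X B Y) ≤ (1 - minWeight L (#X + 1)) ^ #Y := by
  induction Y using Finset.induction_on with
  | empty =>
    rw [Finset.card_empty, pow_zero]
    exact (MeasureTheory.measure_mono fun S hS => hS.1).trans hμ.measure_KNset.le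
  | insert y Y hy ih =>
    calc μ (unrealized K N X B (insert y Y))
      _ ≤ (1 - minWeight L (#X + 1)) * μ (unrealized K N X B Y) :=
        hμ.measure_unrealized_insert_le hK hX hB hY hy
      _ ≤ (1 - minWeight L (#X + 1)) * (1 - minWeight L (#X + 1)) ^ #Y := by
        gcongr
        exact ih ((Finset.subset_insert y Y).trans hY)
      _ = (1 - minWeight L (#X + 1)) ^ #(insert y Y) := by
        rw [Finset.card_insert_of_notMem hy, pow_succ']

theorem measure_biUnion_unrealized_le (hμ : IsFramewiseUniform K N μ) (hK : IsLocalClass K)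
    (hX : X ⊆ Finset.range N) :
    μ (⋃ B ∈ structuresOn K (insert N X), unrealized K N X B (Finset.range N \ X)) ≤
      structureBound L (#X + 1) * (1 - minWeight L (#X + 1)) ^ (N - #X) := by
  have hfinite := hK.finite_structuresOn (insert N X)
  have hcard : #hfinite.toFinset ≤ structureBound L (#X + 1) :=
    (Set.ncard_eq_toFinset_card _ hfinite).symm.trans_le
      (hK.ncard_structuresOn_le (Finset.card_insert_le N X))
  calc μ (⋃ B ∈ structuresOn K (insert N X), unrealized K N X B (Finset.range N \ X))
    _ ≤ ∑ B ∈ hfinite.toFinset, μ (unrealized K N X B (Finset.range N \ X)) := by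
      simpa only [Set.Finite.mem_toFinset] using MeasureTheory.measure_biUnion_finset_le
        hfinite.toFinset fun B => unrealized K N X B (Finset.range N \ X)
    _ ≤ #hfinite.toFinset • (1 - minWeight L (#X + 1)) ^ (N - #X) := by
      refine Finset.sum_le_card_nsmul _ _ _ fun B hB => ?_
      refine (hμ.measure_unrealized_le hK hX (hfinite.mem_toFinset.1 hB) subset_rfl).trans_eq ?_
      rw [Finset.card_sdiff_of_subset hX, Finset.card_range]
    _ ≤ structureBound L (#X + 1) * (1 - minWeight L (#X + 1)) ^ (N - #X) := by
      rw [nsmul_eq_mul]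
      gcongr

theorem measure_not_hasExtensions_le (hμ : IsFramewiseUniform K N μ) (hK : IsLocalClass K)
    (m : ℕ) : μ {S | S ∈ KNset K N ∧ ¬ HasExtensions K N m S} ≤
      structureBound L (m + 1) * (N ^ m * (1 - minWeight L (m + 1)) ^ (N - m)) := by
  set c := structureBound L (m + 1) * (1 - minWeight L (m + 1)) ^ (N - m)
  have hsub : {S | S ∈ KNset K N ∧ ¬ HasExtensions K N m S} ⊆
      ⋃ X ∈ Finset.powersetCard m (Finset.range N), ⋃ B ∈ structuresOn K (insert N X),
        unrealized K N X B (Finset.range N \ X) := by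
    rintro S ⟨hS, hext⟩
    simp only [HasExtensions, not_forall, not_exists, not_and] at hext
    obtain ⟨X, hX, hXm, B, hB, hSB, hy⟩ := hext
    exact Set.mem_biUnion (Finset.mem_powersetCard.2 ⟨hX, hXm⟩)
      (Set.mem_biUnion hB ⟨hS, hSB, hy⟩)
  have hbound : ∀ X ∈ Finset.powersetCard m (Finset.range N),
      μ (⋃ B ∈ structuresOn K (insert N X), unrealized K N X B (Finset.range N \ X)) ≤ c := by
    intro X hX
    obtain ⟨hXN, rfl⟩ := Finset.mem_powersetCard.1 hX
    exact hμ.measure_biUnion_unrealized_le hK hXN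
  calc μ {S | S ∈ KNset K N ∧ ¬ HasExtensions K N m S}
    _ ≤ #(Finset.powersetCard m (Finset.range N)) • c :=
      (MeasureTheory.measure_mono hsub).trans <| (MeasureTheory.measure_biUnion_finset_le _ _).trans
        (Finset.sum_le_card_nsmul _ _ _ hbound)
    _ ≤ (N ^ m : ℕ) * c := by
      rw [nsmul_eq_mul, Finset.card_powersetCard, Finset.card_range]
      gcongr
      exact Nat.choose_le_pow N m
    _ = structureBound L (m + 1) * (N ^ m * (1 - minWeight L (m + 1)) ^ (N - m)) := by
      rw [Nat.cast_pow, mul_left_comm]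

end IsFramewiseUniform

end ExtensionProperty

section Limits

open Filter
open MeasureTheory (Measure)
open scoped ENNReal Topology

theorem tendsto_natCast_pow_mul_pow_sub (k m : ℕ) {ρ : ℝ≥0∞} (hρ : ρ < 1) :
    Tendsto (fun N : ℕ => (N : ℝ≥0∞) ^ k * ρ ^ (N - m)) atTop (𝓝 0) := by
  lift ρ to NNReal using (hρ.trans ENNReal.one_lt_top).ne
  have hρ' : |(ρ : ℝ)| < 1 := by
    rw [abs_of_nonneg ρ.coe_nonneg]
    exact_mod_cast hρ
  have hpow : Tendsto (fun n : ℕ => (n : NNReal) ^ k * ρ ^ n) atTop (𝓝 0) := by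
    rw [← NNReal.tendsto_coe]
    push_cast
    exact tendsto_pow_const_mul_const_pow_of_abs_lt_one k hρ'
  have hmul : Tendsto (fun n : ℕ => (2 : ℝ≥0∞) ^ k * ((n : ℝ≥0∞) ^ k * (ρ : ℝ≥0∞) ^ n)) atTop
      (𝓝 0) := by
    have h := ENNReal.Tendsto.const_mul (a := 2 ^ k) (ENNReal.tendsto_coe.2 hpow)
      (Or.inr (ENNReal.pow_ne_top ENNReal.ofNat_ne_top))
    simpa only [ENNReal.coe_zero, mul_zero, ENNReal.coe_mul, ENNReal.coe_pow,
      ENNReal.coe_natCast] using h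
  refine tendsto_of_tendsto_of_tendsto_of_le_of_le' tendsto_const_nhds
    (hmul.comp (tendsto_sub_atTop_nat m)) (Eventually.of_forall fun _ => zero_le) ?_
  filter_upwards [eventually_ge_atTop (2 * m)] with N hN
  have hle : (N : ℝ≥0∞) ≤ 2 * (N - m : ℕ) := by exact_mod_cast (by omega : N ≤ 2 * (N - m))
  calc (N : ℝ≥0∞) ^ k * ρ ^ (N - m) ≤ (2 * (N - m : ℕ)) ^ k * ρ ^ (N - m) := by gcongr
    _ = 2 ^ k * ((N - m : ℕ) ^ k * ρ ^ (N - m)) := by rw [mul_pow, mul_assoc]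

variable [L.IsRelational] [∀ n, Finite (L.Relations n)] [MeasurableSpace (FinStruc L)]
  [DiscreteMeasurableSpace (FinStruc L)] {K : Set (FinStruc L)} {μ : ℕ → Measure (FinStruc L)}

theorem tendsto_measure_not_hasExtensions (hμ : ∀ N, IsFramewiseUniform K N (μ N))
    (hK : IsLocalClass K) (m : ℕ) :
    Tendsto (fun N => μ N {S | S ∈ KNset K N ∧ ¬ HasExtensions K N m S}) atTop (𝓝 0) := by
  have h := ENNReal.Tendsto.const_mul (a := structureBound L (m + 1))
    (tendsto_natCast_pow_mul_pow_sub m m (one_sub_minWeight_lt_one L (m + 1)))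
    (Or.inr (ENNReal.natCast_ne_top _))
  rw [mul_zero] at h
  exact tendsto_of_tendsto_of_tendsto_of_le_of_le tendsto_const_nhds h (fun _ => zero_le)
    fun N => (hμ N).measure_not_hasExtensions_le hK m

theorem tendsto_measure_exists_not_hasExtensions (hμ : ∀ N, IsFramewiseUniform K N (μ N))
    (hK : IsLocalClass K) (q : ℕ) :
    Tendsto (fun N => μ N {S | S ∈ KNset K N ∧ ∃ m < q, ¬ HasExtensions K N m S}) atTop (𝓝 0) := by
  have h := tendsto_finsetSum (Finset.range q) fun m _ => tendsto_measure_not_hasExtensions hμ hK m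
  rw [Finset.sum_const_zero] at h
  refine tendsto_of_tendsto_of_tendsto_of_le_of_le tendsto_const_nhds h (fun _ => zero_le)
    fun N => (MeasureTheory.measure_mono ?_).trans (MeasureTheory.measure_biUnion_finset_le _ _)
  rintro S ⟨hS, m, hm, hext⟩
  exact Set.mem_biUnion (Finset.mem_range.2 hm) ⟨hS, hext⟩

end Limits

section FraisseLimit

open FinStruc
open scoped Finset

variable {M : Type*} [L.Structure M] {g : ℕ → M} {Z : Finset ℕ}

namespace FinStruc

/-- The structure on `Z` whose relations are pulled back from `M` along `g`. When `g` is injective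
on `Z`, this is a copy of the substructure of `M` on `g '' Z`. -/
def comap (g : ℕ → M) (Z : Finset ℕ) : FinStruc L where
  carrier := Z
  rel := fun _ r => {t | (∀ i, t i ∈ Z) ∧ Structure.RelMap r (g ∘ t)}
  rel_mem := fun _ _ _ ht => ht.1

theorem relabel_comap_swap {a b : ℕ} (h : g a = g b) : (comap g Z : FinStruc L).relabel
    (Equiv.swap a b) = comap g (Z.map (Equiv.swap a b).toEmbedding) := by
  have hg : g ∘ (Equiv.swap a b).symm = g := by
    rw [Equiv.symm_swap, Equiv.comp_swap_eq_update, h, Function.update_eq_self, ← h,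
      Function.update_eq_self]
  refine FinStruc.ext rfl fun n r t => and_congr (forall_congr' fun i => ?_) ?_
  · exact Finset.mem_map_equiv.symm
  · rw [← Function.comp_assoc, hg]

variable [L.IsRelational] {ι : Type*} {S : FinStruc L}

theorem nonempty_embedding_comap (hg : Set.InjOn g Z) :
    Nonempty ({x // x ∈ (comap g Z : FinStruc L).carrier} ↪[L] M) :=
  ⟨{ toFun := fun x => g x
     inj' := hg.injective
     map_fun' := fun f => isEmptyElim f
     map_rel' := fun _ x => ⟨fun hx => ⟨fun i => (x i).2, hx⟩, And.right⟩ }⟩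

theorem sameAtomicType_of_agreeOn_comap (hg : Set.InjOn g Z)
    (h : S.AgreeOn Z.powerset (comap g Z)) {b : ι → {x // x ∈ S.carrier}}
    (hb : ∀ i, (b i : ℕ) ∈ Z) :
    SameAtomicType L (fun i => g (b i)) b where
  eq_iff i j := (hg.eq_iff (hb i) (hb j)).trans Subtype.ext_iff.symm
  relMap_iff r f := by
    have hf (i) : (b (f i) : ℕ) ∈ Z := hb (f i)
    exact (and_iff_right hf).symm.trans
      (h r _ (Finset.mem_powerset.2 (tupleRange_subset_iff.2 hf))).symm

theorem agreeOn_comap_of_sameAtomicType {n : ℕ} {b : Fin n → {x // x ∈ S.carrier}}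
    (h : SameAtomicType L (fun i => g (b i)) b) (hZ : tupleRange (fun i => (b i : ℕ)) ⊆ Z) :
    S.AgreeOn (tupleRange fun i => (b i : ℕ)).powerset (comap g Z) := by
  intro k r t ht
  rw [Finset.mem_powerset] at ht
  choose f _ hf using fun i => Finset.mem_image.1 (tupleRange_subset_iff.1 ht i)
  obtain rfl : (fun i => (b (f i) : ℕ)) = t := funext hf
  exact (h.relMap_iff r f).symm.trans
    (and_iff_right (tupleRange_subset_iff.1 (ht.trans hZ))).symm

end FinStruc

theorem exists_labelling [L.IsRelational] {S : FinStruc L} {n : ℕ} {a : Fin n → M}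
    {b : Fin n → {x // x ∈ S.carrier}} (h : SameAtomicType L a b) {c : M} (hc : c ∉ Set.range a) :
    ∃ g : ℕ → M, (∀ i, g (b i) = a i) ∧
      ∀ y ∉ tupleRange fun i => (b i : ℕ),
        g y = c ∧ Set.InjOn g ↑(insert y (tupleRange fun i => (b i : ℕ))) := by
  have hfactors : Function.FactorsThrough a fun i => (b i : ℕ) :=
    fun i j hij => (h.eq_iff i j).2 (Subtype.ext hij)
  refine ⟨Function.extend (fun i => (b i : ℕ)) a fun _ => c, hfactors.extend_apply _,
    fun y hy => ?_⟩
  have hyc : Function.extend (fun i => (b i : ℕ)) a (fun _ => c) y = c :=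
    Function.extend_apply' _ _ _ fun ⟨i, hi⟩ =>
      hy (Finset.mem_image.2 ⟨i, Finset.mem_univ i, hi⟩)
  refine ⟨hyc, ?_⟩
  rw [Finset.coe_insert, Set.injOn_insert (Finset.mem_coe.not.2 hy), hyc, tupleRange,
    Finset.coe_image, Finset.coe_univ, Set.image_univ]
  constructor
  · rintro _ ⟨i, rfl⟩ _ ⟨j, rfl⟩ hij
    rw [hfactors.extend_apply, hfactors.extend_apply] at hij
    exact congrArg Subtype.val ((h.eq_iff i j).1 hij)
  · rintro ⟨_, ⟨i, rfl⟩, hi⟩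
    exact hc ⟨i, (hfactors.extend_apply _ i).symm.trans hi⟩

variable [L.IsRelational] {K : Set (FinStruc L)} {N q : ℕ} {S : FinStruc L}

theorem exists_answer_of_hasExtensions
    (hage : ∀ A : FinStruc L, A ∈ K ↔ Nonempty ({x // x ∈ A.carrier} ↪[L] M))
    (hS : S ∈ KNset K N) (hext : ∀ m < q, HasExtensions K N m S) {m : ℕ} (hm : m < q)
    {a : Fin m → M} {b : Fin m → {x // x ∈ S.carrier}} (h : SameAtomicType L a b) {c : M}
    (hc : c ∉ Set.range a) :
    ∃ d, SameAtomicType L (Fin.snoc a c : Fin (m + 1) → M) (Fin.snoc b d) := by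
  obtain ⟨g, hgb, hgc⟩ := exists_labelling h hc
  set X := tupleRange fun i => (b i : ℕ)
  have hX : X ⊆ Finset.range N := tupleRange_subset_iff.2 fun i => hS.2 ▸ (b i).2
  have hNX : N ∉ X := fun hN => Finset.notMem_range_self (hX hN)
  have hcard : #X < q := (Finset.card_image_le.trans_eq (Finset.card_fin m)).trans_lt hm
  obtain ⟨y, hy, hSy⟩ := hext #X hcard X hX rfl (comap g (insert N X))
    ⟨(hage _).2 (nonempty_embedding_comap (hgc N hNX).2), rfl⟩
    (agreeOn_comap_of_sameAtomicType ((funext hgb : (fun i => g (b i)) = a) ▸ h)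
      (Finset.subset_insert N X))
  obtain ⟨hyN, hyX⟩ := Finset.mem_sdiff.1 hy
  have hcarrier : (insert N X).map (Equiv.swap N y).toEmbedding = insert y X :=
    carrier_relabel_swap (B := (comap g (insert N X) : FinStruc L)) rfl hNX hyX
  rw [relabel_comap_swap ((hgc N hNX).1.trans (hgc y hyX).1.symm), hcarrier] at hSy
  let d : {x // x ∈ S.carrier} := ⟨y, hS.2 ▸ hyN⟩
  have hmem : ∀ i, ((Fin.snoc b d : Fin (m + 1) → {x // x ∈ S.carrier}) i : ℕ) ∈ insert y X := by
    refine Fin.lastCases ?_ fun i => ?_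
    · rw [Fin.snoc_last]
      exact Finset.mem_insert_self y X
    · rw [Fin.snoc_castSucc]
      exact Finset.mem_insert_of_mem (tupleRange_subset_iff.1 subset_rfl i)
  have hsnoc : (fun i => g ((Fin.snoc b d : Fin (m + 1) → {x // x ∈ S.carrier}) i)) =
      (Fin.snoc a c : Fin (m + 1) → M) := by
    refine funext (Fin.lastCases ?_ fun i => ?_)
    · rw [Fin.snoc_last, Fin.snoc_last, (hgc y hyX).1]
    · rw [Fin.snoc_castSucc, Fin.snoc_castSucc, hgb]
  exact ⟨d, hsnoc ▸ sameAtomicType_of_agreeOn_comap (hgc y hyX).2 hSy hmem⟩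

theorem forthUpTo_of_hasExtensions
    (hage : ∀ A : FinStruc L, A ∈ K ↔ Nonempty ({x // x ∈ A.carrier} ↪[L] M))
    (hS : S ∈ KNset K N) (hext : ∀ m < q, HasExtensions K N m S) :
    ForthUpTo L M {x // x ∈ S.carrier} q := by
  intro m hm a b h c
  by_cases hc : c ∈ Set.range a
  · obtain ⟨i, rfl⟩ := hc
    have hcomp := h.comp (Fin.snoc id i : Fin (m + 1) → Fin m)
    rw [Fin.comp_snoc, Fin.comp_snoc, Function.comp_id, Function.comp_id] at hcomp
    exact ⟨b i, hcomp⟩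
  · exact exists_answer_of_hasExtensions hage hS hext hm h hc

theorem sat_iff_of_hasExtensions [IsEmpty (L.Relations 0)] (hM : L.IsUltrahomogeneous M)
    (hage : ∀ A : FinStruc L, A ∈ K ↔ Nonempty ({x // x ∈ A.carrier} ↪[L] M)) (φ : L.Sentence)
    (hS : S ∈ KNset K N) (hext : ∀ m < varBound φ, HasExtensions K N m S) :
    S.Sat φ ↔ M ⊨ φ :=
  have : Nonempty ({x // x ∈ S.carrier} ↪[L] M) := (hage S).1 hS.1
  sentence_realize_iff_of_forthUpTo φ (forthUpTo_of_isUltrahomogeneous hM _)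
    (forthUpTo_of_hasExtensions hage hS hext)

theorem IsLocalClass.mem_iff_nonempty_embedding [Countable (Σ l, L.Functions l)]
    (hK : IsLocalClass K) {R : Type} [L.Structure R] [Countable R]
    (hR : IsFraisseLimit (toBundled L K) R) (A : FinStruc L) :
    A ∈ K ↔ Nonempty ({x // x ∈ A.carrier} ↪[L] R) := by
  have hmem : A ∈ K ↔ (⟨{x // x ∈ A.carrier}, A.str⟩ : CategoryTheory.Bundled L.Structure) ∈
      toBundled L K :=
    ⟨fun hA => ⟨A, hA, ⟨.refl L _⟩⟩, fun ⟨_, hB, ⟨e⟩⟩ => hK.mem_of_equiv hB e⟩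
  rw [hmem, ← hR.age]
  exact and_iff_right (Structure.FG.of_finite (M := {x // x ∈ A.carrier}))

end FraisseLimit

section ZeroOneLaw

open Filter
open MeasureTheory (Measure)
open scoped Topology

variable [L.IsRelational] [MeasurableSpace (FinStruc L)] [DiscreteMeasurableSpace (FinStruc L)]
  {K : Set (FinStruc L)}

theorem IsFramewiseUniform.measure_sat_eq_one_sub {N : ℕ} {μ : Measure (FinStruc L)}
    (hμ : IsFramewiseUniform K N μ) (φ : L.Sentence) :
    μ {S | S ∈ KNset K N ∧ S.Sat φ} = 1 - μ {S | S ∈ KNset K N ∧ S.Sat φ.not} := by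
  have hadd := MeasureTheory.measure_inter_add_sdiff (μ := μ) (KNset K N)
    (.of_discrete (s := {S | S.Sat φ}))
  rw [hμ.measure_KNset] at hadd
  exact ENNReal.eq_sub_of_add_eq (MeasureTheory.measure_ne_top_of_subset (fun S hS => hS.1)
    (hμ.measure_KNset ▸ ENNReal.one_ne_top)) hadd

variable [∀ n, Finite (L.Relations n)]

theorem IsFramewiseUniform.isEmpty_relations_zero {N : ℕ} {μ : Measure (FinStruc L)}
    (hμ : IsFramewiseUniform K N μ) (hK : IsLocalClass K) : IsEmpty (L.Relations 0) :=
  have ⟨_, hP⟩ := hμ.nonempty_KNset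
  hK.isEmpty_relations_zero (hμ.fillingCount_empty hK hP)

variable {R : Type*} [L.Structure R] {μ : ℕ → Measure (FinStruc L)}

theorem tendsto_measure_sat_of_not_realize (hK : IsLocalClass K) (hR : L.IsUltrahomogeneous R)
    (hage : ∀ A : FinStruc L, A ∈ K ↔ Nonempty ({x // x ∈ A.carrier} ↪[L] R))
    (hμ : ∀ N, IsFramewiseUniform K N (μ N)) {φ : L.Sentence} (hφ : ¬ R ⊨ φ) :
    Tendsto (fun N => μ N {S | S ∈ KNset K N ∧ S.Sat φ}) atTop (𝓝 0) := by
  have := (hμ 0).isEmpty_relations_zero hK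
  refine tendsto_of_tendsto_of_tendsto_of_le_of_le tendsto_const_nhds
    (tendsto_measure_exists_not_hasExtensions hμ hK (varBound φ)) (fun _ => zero_le)
    fun N => MeasureTheory.measure_mono fun S hS => ⟨hS.1, ?_⟩
  by_contra! hext
  exact hφ ((sat_iff_of_hasExtensions hR hage φ hS.1 hext).1 hS.2)

open scoped Classical in
theorem statement_12_general (hK : IsLocalClass K) (hR : L.IsUltrahomogeneous R)
    (hage : ∀ A : FinStruc L, A ∈ K ↔ Nonempty ({x // x ∈ A.carrier} ↪[L] R))
    (hμ : ∀ N, IsFramewiseUniform K N (μ N)) (φ : L.Sentence) :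
    Tendsto (fun N => μ N {S | S ∈ KNset K N ∧ S.Sat φ}) atTop (𝓝 (if R ⊨ φ then 1 else 0)) := by
  split_ifs with hφ
  · have hnot := tendsto_measure_sat_of_not_realize hK hR hage hμ (φ := φ.not) (not_not.2 hφ)
    simp only [(hμ _).measure_sat_eq_one_sub φ]
    simpa only [tsub_zero] using
      ENNReal.Tendsto.sub tendsto_const_nhds hnot (Or.inl ENNReal.one_ne_top)
  · exact tendsto_measure_sat_of_not_realize hK hR hage hμ hφ

end ZeroOneLaw

open scoped Classical in
/-- The 0-1 law for local classes: for every first-order sentence `φ`, the frame-wise uniform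
measure of the set of members of `K^N` satisfying `φ` converges as `N → ∞`, with limit `1` if
`φ` holds in the Fraïssé limit of `K` and limit `0` otherwise. -/
theorem statement_12 (L : FirstOrder.Language.{u, v}) [L.IsRelational]
    [∀ n, Finite (L.Relations n)] [Countable (Σ l, L.Functions l)]
    (K : Set (FinStruc L)) (hK : IsLocalClass K)
    (R : Type) [L.Structure R] [Countable R] (hR : IsFraisseLimit (toBundled L K) R)
    (μ : ℕ → @MeasureTheory.Measure (FinStruc L) ⊤)
    (hprob : ∀ N, MeasureTheory.IsProbabilityMeasure (μ N))
    (hconc : ∀ N, μ N (KNset K N) = 1)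
    (h0 : ∀ N, ∀ A ∈ K, A.carrier ⊆ Finset.range N → μ N (ONset K N A 0) = 1)
    (hrec : ∀ N, ∀ A ∈ K, A.carrier ⊆ Finset.range N → ∀ k : ℕ,
      μ N (ONset K N A (k + 1)) = μ N (ONset K N A k) / (Ncount K A k : ENNReal))
    (φ : L.Sentence) :
    Filter.Tendsto (fun N => μ N { S | S ∈ KNset K N ∧ S.Sat φ }) Filter.atTop
      (nhds (if R ⊨ φ then (1 : ENNReal) else 0)) := by
  let : MeasurableSpace (FinStruc L) := ⊤
  exact statement_12_general hK hR.ultrahomogeneous (hK.mem_iff_nonempty_embedding hR)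
    (fun N => ⟨hconc N, fun A hA => h0 N A hA.1 hA.2.le, fun A hA => hrec N A hA.1 hA.2.le⟩) φ
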